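/- arXiv:2411.02918 — 2 statements merged into one kernel-verified Lean document; each statement's English description precedes it below -/
import Mathlib

section
/- Let G ∈ 𝒰_{r,t} with r ≥ 3, t ≥ 1, and let n = r + t be the order of G. Then φ(G) ≥ ⌊n/2⌋ + 2, with equality if and only if G is isomorphic to U_{3,1}, U_{5,1}, or U_{4,4}. -/
open SimpleGraph

/-- A dissociation set: a set of vertices inducing a subgraph of maximum degree at most 1,
i.e., every vertex of `S` has at most one neighbour inside `S`. -/
def IsDissoc {V : Type*} (G : SimpleGraph V) (S : Set V) : Prop :=
  ∀ v ∈ S, {u | u ∈ S ∧ G.Adj v u}.Subsingleton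

/-- A maximal dissociation set: a dissociation set not properly contained in another one. -/
def IsMaxDissoc {V : Type*} (G : SimpleGraph V) (S : Set V) : Prop :=
  IsDissoc G S ∧ ∀ T : Set V, IsDissoc G T → S ⊆ T → S = T

/-- `phi G` is the number of maximal dissociation sets of `G`. -/
noncomputable def phi {V : Type*} (G : SimpleGraph V) : ℕ :=
  {S : Set V | IsMaxDissoc G S}.ncard

/-- The number of maximal dissociation sets of `G` not containing `u`. -/
noncomputable def phiNot {V : Type*} (G : SimpleGraph V) (u : V) : ℕ :=
  {S : Set V | IsMaxDissoc G S ∧ u ∉ S}.ncard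

/-- The number of maximal dissociation sets `S` of `G` with `u ∈ S` and
`u` of degree 0 in the subgraph induced by `S`. -/
noncomputable def phi0 {V : Type*} (G : SimpleGraph V) (u : V) : ℕ :=
  {S : Set V | IsMaxDissoc G S ∧ u ∈ S ∧ ∀ x ∈ S, ¬ G.Adj u x}.ncard

/-- The number of maximal dissociation sets `S` of `G` with `u ∈ S` and
`u` of degree 1 in the subgraph induced by `S`. -/
noncomputable def phi1 {V : Type*} (G : SimpleGraph V) (u : V) : ℕ :=
  {S : Set V | IsMaxDissoc G S ∧ u ∈ S ∧ ∃! x, x ∈ S ∧ G.Adj u x}.ncard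

/-- A unicyclic graph: a connected graph whose number of edges equals its number of vertices
(equivalently, a connected graph with exactly one cycle). -/
def IsUnicyclic {V : Type*} [Fintype V] (G : SimpleGraph V) : Prop :=
  G.Connected ∧ G.edgeSet.ncard = Fintype.card V

/-- The tree `T(p,q)` (for `q ≤ p`): obtained from the star `K_{1,p}` by subdividing
exactly `q` of its edges.  The centre is `Sum.inl ()`, the `p` neighbours of the centre are
`Sum.inr (Sum.inl i)`, and for `j < q` the vertex `Sum.inr (Sum.inr j)` is the subdivision
pendant attached to the `j`-th neighbour.  It has `1 + p + q` vertices. -/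
def treeT (p q : ℕ) (h : q ≤ p) : SimpleGraph (Unit ⊕ Fin p ⊕ Fin q) :=
  SimpleGraph.fromRel fun a b =>
    (∃ i : Fin p, a = Sum.inl () ∧ b = Sum.inr (Sum.inl i)) ∨
    (∃ j : Fin q, a = Sum.inr (Sum.inl (Fin.castLE h j)) ∧ b = Sum.inr (Sum.inr j))

/-- The unicyclic graph `U(p,q)` (for `q ≤ p`): obtained by identifying one vertex of the
triangle `K₃` with the centre of `T(p,q)`.  The centre is `Sum.inl ()`, the two other triangle
vertices are `Sum.inr (Sum.inl 0)` and `Sum.inr (Sum.inl 1)`, and the copy of `T(p,q)` sits on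
the remaining vertices.  It has `3 + p + q` vertices. -/
def graphU (p q : ℕ) (h : q ≤ p) : SimpleGraph (Unit ⊕ Fin 2 ⊕ Fin p ⊕ Fin q) :=
  SimpleGraph.fromRel fun a b =>
    (a = Sum.inl () ∧ b = Sum.inr (Sum.inl 0)) ∨
    (a = Sum.inl () ∧ b = Sum.inr (Sum.inl 1)) ∨
    (a = Sum.inr (Sum.inl 0) ∧ b = Sum.inr (Sum.inl 1)) ∨
    (∃ i : Fin p, a = Sum.inl () ∧ b = Sum.inr (Sum.inr (Sum.inl i))) ∨
    (∃ j : Fin q, a = Sum.inr (Sum.inr (Sum.inl (Fin.castLE h j))) ∧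
      b = Sum.inr (Sum.inr (Sum.inr j)))

/-- The unicyclic graph obtained from the cycle `C_r` by attaching one pendant vertex
`Sum.inr j` to the cycle vertex `Sum.inl (f j)` for each `j : Fin t`.  For injective `f`
this is a member of the class `𝒰_{r,t}`. -/
def graphUrtF (r t : ℕ) (f : Fin t → Fin r) : SimpleGraph (Fin r ⊕ Fin t) :=
  SimpleGraph.fromRel fun a b =>
    (∃ i j : Fin r, a = Sum.inl i ∧ b = Sum.inl j ∧ (cycleGraph r).Adj i j) ∨
    (∃ j : Fin t, a = Sum.inl (f j) ∧ b = Sum.inr j)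

/-- The canonical member `U_{r,t}` of `𝒰_{r,t}` (for `t ≤ r`): the cycle `C_r` with one
pendant vertex attached to each of its first `t` vertices. -/
def graphUrt (r t : ℕ) (h : t ≤ r) : SimpleGraph (Fin r ⊕ Fin t) :=
  graphUrtF r t (Fin.castLE h)

/-- A caterpillar: a tree in which deleting all vertices of degree 1 leaves a path. -/
def IsCaterpillar {V : Type*} [Fintype V] (G : SimpleGraph V) : Prop :=
  G.IsTree ∧ ∃ m : ℕ,
    Nonempty ((G.induce {v | 2 ≤ (G.neighborSet v).ncard}) ≃g SimpleGraph.pathGraph m)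

/-- The graph `G₁` obtained from `U` by adding `k` new pendant vertices
`v₁ = Sum.inr 0, …, v_k = Sum.inr (k-1)`, each adjacent to `w`. -/
def addPendants {V : Type*} (U : SimpleGraph V) (w : V) (k : ℕ) : SimpleGraph (V ⊕ Fin k) :=
  SimpleGraph.fromRel fun a b =>
    (∃ x y, a = Sum.inl x ∧ b = Sum.inl y ∧ U.Adj x y) ∨
    (∃ j : Fin k, a = Sum.inl w ∧ b = Sum.inr j)

/-- The graph `G₂ = G₁ - w v_k + v₁ v_k`: obtained from `U` by attaching the pendant vertices
`v₁, …, v_{k-1}` to `w` and the vertex `v_k` to `v₁`. -/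
def swapPendant {V : Type*} (U : SimpleGraph V) (w : V) (k : ℕ) : SimpleGraph (V ⊕ Fin k) :=
  SimpleGraph.fromRel fun a b =>
    (∃ x y, a = Sum.inl x ∧ b = Sum.inl y ∧ U.Adj x y) ∨
    (∃ j : Fin k, j.val < k - 1 ∧ a = Sum.inl w ∧ b = Sum.inr j) ∨
    (∃ j₀ j₁ : Fin k, j₀.val = 0 ∧ j₁.val = k - 1 ∧ a = Sum.inr j₀ ∧ b = Sum.inr j₁)

/-- The graph obtained from `H` by attaching a pendant path of length 2 at `w`:
two new vertices `v = Sum.inr 0` and `u = Sum.inr 1` with edges `w v` and `v u`. -/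
def addPath2 {V : Type*} (H : SimpleGraph V) (w : V) : SimpleGraph (V ⊕ Fin 2) :=
  SimpleGraph.fromRel fun a b =>
    (∃ x y, a = Sum.inl x ∧ b = Sum.inl y ∧ H.Adj x y) ∨
    (a = Sum.inl w ∧ b = Sum.inr 0) ∨
    (a = Sum.inr 0 ∧ b = Sum.inr 1)

theorem IsDissoc.mono {V : Type*} {G : SimpleGraph V} {S T : Set V} (hT : IsDissoc G T)
    (hST : S ⊆ T) : IsDissoc G S :=
  fun v hv _ hu _ hw => hT v (hST hv) ⟨hST hu.1, hu.2⟩ ⟨hST hw.1, hw.2⟩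

theorem isDissoc_iff_forall_ne {V : Type*} {G : SimpleGraph V} {S : Set V} :
    IsDissoc G S ↔ ∀ v u w, u ≠ w → G.Adj v u → G.Adj v w → ¬ (v ∈ S ∧ u ∈ S ∧ w ∈ S) := by
  constructor
  · rintro h v u w huw hu hw ⟨hvS, huS, hwS⟩
    exact huw (h v hvS ⟨huS, hu⟩ ⟨hwS, hw⟩)
  · intro h v hv u hu w hw
    by_contra huw
    exact h v u w huw hu.2 hw.2 ⟨hv, hu.1, hw.1⟩

theorem isDissoc_image_iff {V W : Type*} {H : SimpleGraph W} {G : SimpleGraph V} (e : H ↪g G)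
    (S : Set W) : IsDissoc G (e '' S) ↔ IsDissoc H S := by
  simp only [isDissoc_iff_forall_ne]
  constructor
  · rintro h v u w huw hu hw ⟨hvS, huS, hwS⟩
    exact h (e v) (e u) (e w) (e.injective.ne huw) (e.map_adj_iff.2 hu) (e.map_adj_iff.2 hw)
      ⟨⟨v, hvS, rfl⟩, ⟨u, huS, rfl⟩, ⟨w, hwS, rfl⟩⟩
  · rintro h _ _ _ huw hu hw ⟨⟨v, hvS, rfl⟩, ⟨u, huS, rfl⟩, ⟨w, hwS, rfl⟩⟩
    exact h v u w (fun h => huw (h ▸ rfl)) (e.map_adj_iff.1 hu) (e.map_adj_iff.1 hw)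
      ⟨hvS, huS, hwS⟩

theorem IsDissoc.exists_isMaxDissoc {V : Type*} [Finite V] {G : SimpleGraph V} {S : Set V}
    (hS : IsDissoc G S) : ∃ M, S ⊆ M ∧ IsMaxDissoc G M := by
  obtain ⟨M, hSM, hM⟩ := (Set.toFinite {T : Set V | IsDissoc G T}).exists_le_maximal hS
  exact ⟨M, hSM, hM.prop, fun T hT hMT => hM.eq_of_le hT hMT⟩

/-- A maximal dissociation set can be grown from each member of a family of dissociation sets;
these are distinct when no union of two members is a dissociation set. -/
theorem card_le_phi {V ι : Type*} [Finite V] (G : SimpleGraph V) (D : ι → Set V)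
    (hD : ∀ i, IsDissoc G (D i)) (hinc : ∀ i j, IsDissoc G (D i ∪ D j) → i = j) :
    Nat.card ι ≤ phi G := by
  choose M hDM hM using fun i => (hD i).exists_isMaxDissoc
  have hinj : Function.Injective fun i => (⟨M i, hM i⟩ : {S : Set V | IsMaxDissoc G S}) := by
    intro i j hij
    have hij : M i = M j := congrArg Subtype.val hij
    exact hinc i j ((hM i).1.mono (Set.union_subset (hDM i) (hij ▸ hDM j)))
  exact Nat.card_le_card_of_injective _ hinj

theorem phi_le_of_embedding {V W : Type*} [Finite V] {H : SimpleGraph W} {G : SimpleGraph V}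
    (e : H ↪g G) : phi H ≤ phi G := by
  refine card_le_phi G (fun S : {S : Set W | IsMaxDissoc H S} => e '' S)
    (fun S => (isDissoc_image_iff e _).2 S.2.1) fun S T h => ?_
  rw [← Set.image_union, isDissoc_image_iff] at h
  exact Subtype.ext ((S.2.2 _ h Set.subset_union_left).trans
    (T.2.2 _ h Set.subset_union_right).symm)

theorem phi_congr {V W : Type*} [Finite V] [Finite W] {H : SimpleGraph W} {G : SimpleGraph V}
    (e : H ≃g G) : phi H = phi G :=
  (phi_le_of_embedding e.toEmbedding).antisymm (phi_le_of_embedding e.symm.toEmbedding)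

theorem isMaxDissoc_iff_insert {V : Type*} {G : SimpleGraph V} {S : Set V} :
    IsMaxDissoc G S ↔ IsDissoc G S ∧ ∀ v, v ∉ S → ¬ IsDissoc G (insert v S) := by
  refine and_congr_right fun hS => ⟨fun h v hv hd => ?_, fun h T hT hST => ?_⟩
  · exact hv (h _ hd (Set.subset_insert v S) ▸ Set.mem_insert v S)
  · refine hST.antisymm fun v hv => ?_
    by_contra hvS
    exact h v hvS (hT.mono (Set.insert_subset hv hST))

/-- The bit masks of the triples of `{0, …, n - 1}` in which one element is `adj`-related to the
two others. -/
def tripleMasks (n : ℕ) (adj : ℕ → ℕ → Bool) : List ℕ :=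
  (List.range n).flatMap fun v => (List.range n).flatMap fun u => (List.range u).flatMap fun w =>
    if adj v u && adj v w then [2 ^ v ||| 2 ^ u ||| 2 ^ w] else []

/-- `m` contains none of the masks in `L`. -/
def avoidsMasks (L : List ℕ) (m : ℕ) : Bool :=
  L.all fun b => !((m &&& b).beq b)

/-- `m` avoids `L` and is maximal with this property among the subsets of `{0, …, n - 1}`. -/
def maxAvoidsMasks (L : List ℕ) (n m : ℕ) : Bool :=
  avoidsMasks L m && (List.range n).all fun v => m.testBit v || !avoidsMasks L (m ||| 2 ^ v)

/-- The number of maximal subsets of `{0, …, n - 1}` containing none of the masks in `L`. -/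
def countMaxAvoiding (L : List ℕ) (n : ℕ) : ℕ :=
  ((Finset.range (2 ^ n)).filter fun m => maxAvoidsMasks L n m = true).card

section Masks

variable {V : Type*} {n : ℕ} (e : V ≃ Fin n)

theorem isDissoc_setOf_testBit_iff {G : SimpleGraph V} {adj : ℕ → ℕ → Bool}
    (hadj : ∀ u v, adj (e u) (e v) = true ↔ G.Adj u v) (m : ℕ) :
    IsDissoc G {v | m.testBit (e v) = true} ↔ avoidsMasks (tripleMasks n adj) m = true := by
  have key : ∀ a b c : ℕ, (m &&& (2 ^ a ||| 2 ^ b ||| 2 ^ c) = 2 ^ a ||| 2 ^ b ||| 2 ^ c) ↔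
      m.testBit a = true ∧ m.testBit b = true ∧ m.testBit c = true := by
    intro a b c
    constructor
    · intro h
      have h' := fun i => congrArg (fun x => x.testBit i) h
      simp only [Nat.testBit_and, Nat.testBit_or, Nat.testBit_two_pow] at h'
      refine ⟨?_, ?_, ?_⟩
      · simpa using h' a
      · simpa using h' b
      · simpa using h' c
    · rintro ⟨ha, hb, hc⟩
      apply Nat.eq_of_testBit_eq
      intro i
      simp only [Nat.testBit_and, Nat.testBit_or, Nat.testBit_two_pow]
      by_cases h1 : a = i
      · subst h1; simp [ha]
      by_cases h2 : b = i
      · subst h2; simp [hb]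
      by_cases h3 : c = i
      · subst h3; simp [hc]
      simp [h1, h2, h3]
  rw [isDissoc_iff_forall_ne]
  simp only [avoidsMasks, tripleMasks, List.all_eq_true, List.mem_flatMap, List.mem_range,
    Bool.not_eq_true', Set.mem_ofPred_eq]
  constructor
  · rintro h b ⟨v, hv, u, hu, w, hw, hb⟩
    split_ifs at hb with hc
    · rw [List.mem_singleton] at hb
      rw [Bool.and_eq_true] at hc
      subst hb
      rw [Bool.eq_false_iff, Ne, Nat.beq_eq, key]
      have h1 := h (e.symm ⟨v, hv⟩) (e.symm ⟨u, hu⟩) (e.symm ⟨w, hw.trans hu⟩)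
        (by simpa using hw.ne') (by rw [← hadj]; simpa using hc.1)
        (by rw [← hadj]; simpa using hc.2)
      simpa using h1
    · simp at hb
  · intro h v u w huw hu hw
    wlog hlt : (e w : ℕ) < e u generalizing u w
    · have hne : (e u : ℕ) ≠ e w := fun h => huw (e.injective (Fin.ext h))
      have := this w u huw.symm hw hu (by omega)
      tauto
    have h1 := h (2 ^ (e v : ℕ) ||| 2 ^ (e u : ℕ) ||| 2 ^ (e w : ℕ))
      ⟨e v, (e v).2, e u, (e u).2, e w, hlt, by simp [(hadj _ _).2 hu, (hadj _ _).2 hw]⟩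
    rwa [Bool.eq_false_iff, Ne, Nat.beq_eq, key] at h1

theorem isMaxDissoc_setOf_testBit_iff {G : SimpleGraph V} {adj : ℕ → ℕ → Bool}
    (hadj : ∀ u v, adj (e u) (e v) = true ↔ G.Adj u v) (m : ℕ) :
    IsMaxDissoc G {v | m.testBit (e v) = true} ↔
      maxAvoidsMasks (tripleMasks n adj) n m = true := by
  have hins : ∀ v, insert v {v | m.testBit (e v) = true} =
      {u | (m ||| 2 ^ (e v : ℕ)).testBit (e u) = true} := by
    intro v
    ext u
    simp only [Set.mem_insert_iff, Set.mem_ofPred_eq, Nat.testBit_or, Nat.testBit_two_pow,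
      Bool.or_eq_true, decide_eq_true_eq]
    rw [or_comm, ← Fin.ext_iff, e.injective.eq_iff, eq_comm (a := u)]
  rw [isMaxDissoc_iff_insert, maxAvoidsMasks, Bool.and_eq_true, isDissoc_setOf_testBit_iff e hadj]
  refine and_congr_right fun _ => ?_
  simp only [hins, isDissoc_setOf_testBit_iff e hadj, List.all_eq_true, List.mem_range,
    Bool.or_eq_true, Set.mem_ofPred_eq, Bool.not_eq_true', Bool.eq_false_iff]
  constructor
  · intro h v hv
    have := h (e.symm ⟨v, hv⟩)
    simp only [Equiv.apply_symm_apply] at this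
    tauto
  · intro h v hv
    have := h (e v) (e v).2
    tauto

theorem phi_eq_countMaxAvoiding {G : SimpleGraph V} {adj : ℕ → ℕ → Bool}
    (hadj : ∀ u v, adj (e u) (e v) = true ↔ G.Adj u v) :
    phi G = countMaxAvoiding (tripleMasks n adj) n := by
  classical
  rw [countMaxAvoiding, ← Set.ncard_coe_finset, phi]
  symm
  refine Set.ncard_congr (fun m _ => {v | m.testBit (e v) = true}) ?_ ?_ ?_
  · intro m hm
    exact (isMaxDissoc_setOf_testBit_iff e hadj m).2 (Finset.mem_filter.1 hm).2
  · intro a b ha hb hab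
    have ha := Finset.mem_range.1 (Finset.mem_filter.1 ha).1
    have hb := Finset.mem_range.1 (Finset.mem_filter.1 hb).1
    apply Nat.eq_of_testBit_eq
    intro i
    by_cases hi : i < n
    · have := Set.ext_iff.1 hab (e.symm ⟨i, hi⟩)
      simp only [Set.mem_ofPred_eq, Equiv.apply_symm_apply] at this
      exact Bool.eq_iff_iff.2 this
    · have hpow : 2 ^ n ≤ 2 ^ i := Nat.pow_le_pow_right two_pos (not_lt.1 hi)
      rw [Nat.testBit_lt_two_pow (ha.trans_le hpow), Nat.testBit_lt_two_pow (hb.trans_le hpow)]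
  · intro S hS
    have heq : {v | (Nat.ofBits fun i => decide (e.symm i ∈ S)).testBit (e v) = true} = S := by
      ext v
      rw [Set.mem_ofPred_eq, Nat.testBit_ofBits_lt _ _ (e v).2, Fin.eta, Equiv.symm_apply_apply,
        decide_eq_true_eq]
    refine ⟨Nat.ofBits fun i => decide (e.symm i ∈ S), ?_, heq⟩
    refine Finset.mem_filter.2 ⟨Finset.mem_range.2 (Nat.ofBits_lt_two_pow _), ?_⟩
    rw [← isMaxDissoc_setOf_testBit_iff e hadj, heq]
    exact hS

end Masks

section CycleWithPendants

theorem cycleGraph_adj_iff_mod {r : ℕ} (hr : 2 ≤ r) (i j : Fin r) :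
    (cycleGraph r).Adj i j ↔ (i + 1 : ℕ) % r = j ∨ (j + 1 : ℕ) % r = i := by
  have hi := i.2
  have hj := j.2
  rw [cycleGraph_adj', Fin.val_sub, Fin.val_sub]
  have key : ∀ a b : ℕ, a < r → b < r → ((r - b + a) % r = 1 ↔ (b + 1) % r = a) := by
    intro a b ha hb
    have h1 : (b + 1) % r = if b + 1 = r then 0 else b + 1 := by
      split_ifs with h
      · rw [h, Nat.mod_self]
      · exact Nat.mod_eq_of_lt (by omega)
    have h2 : (r - b + a) % r = if b ≤ a then a - b else r - b + a := by
      split_ifs with h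
      · rw [show r - b + a = (a - b) + r by omega, Nat.add_mod_right]
        exact Nat.mod_eq_of_lt (by omega)
      · exact Nat.mod_eq_of_lt (by omega)
    rw [h1, h2]
    split_ifs <;> omega
  rw [key _ _ hi hj, key _ _ hj hi, or_comm]

variable {r t : ℕ} (f : Fin t → Fin r)

@[simp] theorem graphUrtF_adj_inl_inl (i j : Fin r) :
    (graphUrtF r t f).Adj (Sum.inl i) (Sum.inl j) ↔ (cycleGraph r).Adj i j := by
  simp only [graphUrtF, SimpleGraph.fromRel_adj]
  constructor
  · rintro ⟨_, (⟨_, _, hi, hj, h⟩ | ⟨_, _, hj⟩) | (⟨_, _, hi, hj, h⟩ | ⟨_, _, hj⟩)⟩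
    · cases hi; cases hj; exact h
    · cases hj
    · cases hi; cases hj; exact h.symm
    · cases hj
  · intro h
    exact ⟨fun hij => h.ne (Sum.inl_injective hij), Or.inl (Or.inl ⟨i, j, rfl, rfl, h⟩)⟩

@[simp] theorem graphUrtF_adj_inl_inr (i : Fin r) (j : Fin t) :
    (graphUrtF r t f).Adj (Sum.inl i) (Sum.inr j) ↔ f j = i := by
  simp [graphUrtF, SimpleGraph.fromRel_adj, eq_comm]

@[simp] theorem graphUrtF_adj_inr_inl (i : Fin r) (j : Fin t) :
    (graphUrtF r t f).Adj (Sum.inr j) (Sum.inl i) ↔ f j = i := by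
  rw [SimpleGraph.adj_comm, graphUrtF_adj_inl_inr]

@[simp] theorem graphUrtF_adj_inr_inr (i j : Fin t) :
    ¬ (graphUrtF r t f).Adj (Sum.inr i) (Sum.inr j) := by
  simp [graphUrtF, SimpleGraph.fromRel_adj]

/-- Rotating the cycle so that the pendants of `g` land on some of the pendants of `f`. -/
theorem nonempty_embedding_graphUrtF [NeZero r] {s : ℕ} {g : Fin s → Fin r} {f : Fin t → Fin r}
    (hg : Function.Injective g) (c : Fin r)
    (h : ∀ j, ∃ k, f k = g j + c) : Nonempty (graphUrtF r s g ↪g graphUrtF r t f) := by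
  choose k hk using h
  have hkinj : Function.Injective k := by
    intro a b hab
    have := hk a
    rw [hab, hk b] at this
    exact hg (add_right_cancel this).symm
  refine ⟨⟨⟨Sum.map (· + c) k, (add_left_injective c).sumMap hkinj⟩, ?_⟩⟩
  rintro (a | a) (b | b)
  · simp [cycleGraph_adj', add_sub_add_right_eq_sub]
  · simp [hk]
  · simp [hk]
  · simp

theorem nonempty_iso_graphUrtF [NeZero r] {g f : Fin t → Fin r}
    (hg : Function.Injective g) (c : Fin r)
    (h : ∀ j, ∃ k, f k = g j + c) : Nonempty (graphUrtF r t f ≃g graphUrtF r t g) := by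
  obtain ⟨e⟩ := nonempty_embedding_graphUrtF hg c h
  exact ⟨(RelIso.ofSurjective e (Finite.surjective_of_injective e.injective)).symm⟩

/-- The adjacency relation of `graphUrtF r t f`, with the `j`-th pendant numbered `r + j`. -/
def urtAdj (r : ℕ) (g : ℕ → ℕ) (a b : ℕ) : Bool :=
  if a < r then
    if b < r then (a + 1) % r == b || (b + 1) % r == a else g (b - r) == a
  else decide (b < r) && g (a - r) == b

theorem urtAdj_iff (hr : 2 ≤ r) (g : ℕ → ℕ) (hg : ∀ j : Fin t, g j = f j) (u v : Fin r ⊕ Fin t) :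
    urtAdj r g (finSumFinEquiv u) (finSumFinEquiv v) = true ↔ (graphUrtF r t f).Adj u v := by
  rcases u with u | u <;> rcases v with v | v <;>
    simp [urtAdj, hg, cycleGraph_adj_iff_mod hr, Fin.ext_iff]

theorem phi_graphUrtF (hr : 2 ≤ r) (g : ℕ → ℕ) (hg : ∀ j : Fin t, g j = f j) :
    phi (graphUrtF r t f) = countMaxAvoiding (tripleMasks (r + t) (urtAdj r g)) (r + t) :=
  phi_eq_countMaxAvoiding finSumFinEquiv (urtAdj_iff f hr g hg)

end CycleWithPendants

section LowerBounds

variable {r t : ℕ}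

/-- Taking two out of each of the triples `{4i, 4i + 1, 4i + 2}` of consecutive vertices. -/
theorem three_pow_le_phi_cycleGraph (hr : 2 ≤ r) : 3 ^ (r / 4) ≤ phi (cycleGraph r) := by
  let D (c : Fin (r / 4) → Fin 3) : Set (Fin r) :=
    {v | v.val % 4 < 3 ∧ ∃ h : v.val / 4 < r / 4, v.val % 4 ≠ (c ⟨v.val / 4, h⟩).val}
  have hcard : Nat.card (Fin (r / 4) → Fin 3) = 3 ^ (r / 4) := by simp
  rw [← hcard]
  refine card_le_phi _ D (fun c => ?_) fun c c' h => ?_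
  · have hthree : ∀ a b d : Fin r, b.val = a.val + 1 → d.val = a.val + 2 →
        ¬ (a ∈ D c ∧ b ∈ D c ∧ d ∈ D c) := by
      rintro a b d hb hd ⟨⟨ha, ka, hca⟩, ⟨hb', kb, hcb⟩, ⟨hd', kd, hcd⟩⟩
      have hbd : b.val / 4 = a.val / 4 := by omega
      have hdd : d.val / 4 = a.val / 4 := by omega
      simp only [hbd] at hcb
      simp only [hdd] at hcd
      have := (c ⟨a.val / 4, ka⟩).2
      omega
    have hlast : ∀ a : Fin r, a ∈ D c → a.val + 1 < r := by
      rintro a ⟨ha, ka, -⟩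
      omega
    have hsucc : ∀ a b : Fin r, a ∈ D c → b ∈ D c → (cycleGraph r).Adj a b →
        b.val = a.val + 1 ∨ a.val = b.val + 1 := by
      intro a b ha hb hab
      rw [cycleGraph_adj_iff_mod hr, Nat.mod_eq_of_lt (hlast a ha),
        Nat.mod_eq_of_lt (hlast b hb)] at hab
      omega
    rw [isDissoc_iff_forall_ne]
    rintro v u w huw hu hw ⟨hv, hu', hw'⟩
    have h1 := hsucc v u hv hu' hu
    have h2 := hsucc v w hv hw' hw
    have h3 : u.val ≠ w.val := fun h => huw (Fin.ext h)
    by_cases hvu : u.val = v.val + 1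
    · exact hthree w v u (by omega) (by omega) ⟨hw', hv, hu'⟩
    · exact hthree u v w (by omega) (by omega) ⟨hu', hv, hw'⟩
  · funext i
    by_contra hne
    have hi := i.2
    have hmem : ∀ j (hj : j < 3), (⟨4 * i + j, by omega⟩ : Fin r) ∈ D c ∪ D c' := by
      intro j hj
      have hdiv : (4 * i.val + j) / 4 = i := by omega
      have hmod : (4 * i.val + j) % 4 = j := by omega
      have hor : j ≠ (c i).val ∨ j ≠ (c' i).val := by
        by_contra! hcon
        exact hne (Fin.ext (hcon.1.symm.trans hcon.2))
      refine hor.imp (fun hj' => ⟨?_, ?_, ?_⟩) (fun hj' => ⟨?_, ?_, ?_⟩)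
      all_goals simp only [hdiv, hmod]
      all_goals assumption
    refine isDissoc_iff_forall_ne.1 h ⟨4 * i + 1, by omega⟩ ⟨4 * i + 0, by omega⟩
      ⟨4 * i + 2, by omega⟩ (by simp) ?_ ?_
      ⟨hmem 1 (by omega), hmem 0 (by omega), hmem 2 (by omega)⟩
    · rw [cycleGraph_adj_iff_mod hr]
      exact Or.inr (Nat.mod_eq_of_lt (by dsimp only; omega))
    · rw [cycleGraph_adj_iff_mod hr]
      exact Or.inl (Nat.mod_eq_of_lt (by dsimp only; omega))

theorem phi_cycleGraph_le (f : Fin t → Fin r) : phi (cycleGraph r) ≤ phi (graphUrtF r t f) :=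
  phi_le_of_embedding ⟨⟨Sum.inl, Sum.inl_injective⟩, by simp⟩

theorem phi_cycleGraph (hr : 2 ≤ r) :
    phi (cycleGraph r) = countMaxAvoiding (tripleMasks r (urtAdj r id)) r :=
  phi_eq_countMaxAvoiding (Equiv.refl _) fun u v => by
    simp [urtAdj, cycleGraph_adj_iff_mod hr]

theorem add_three_le_phi_cycleGraph (hr : 7 ≤ r) : r + 3 ≤ phi (cycleGraph r) := by
  by_cases h : r < 12
  · rw [phi_cycleGraph (by omega)]
    interval_cases r <;> decide +kernel
  · refine le_trans ?_ (three_pow_le_phi_cycleGraph (by omega))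
    have key : ∀ k : ℕ, 3 ≤ k → 4 * k + 6 ≤ 3 ^ k := by
      intro k hk
      induction k, hk using Nat.le_induction with
      | base => norm_num
      | succ k _ ih => rw [pow_succ]; omega
    have := key (r / 4) (by omega)
    omega

theorem phi_graphUrtF_comp_le {s : ℕ} {f : Fin t → Fin r} (k : Fin s → Fin t)
    (hk : Function.Injective k) : phi (graphUrtF r s (f ∘ k)) ≤ phi (graphUrtF r t f) := by
  refine phi_le_of_embedding ⟨⟨Sum.map id k, Function.injective_id.sumMap hk⟩, ?_⟩
  rintro (a | a) (b | b) <;> simp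

theorem phi_le_of_rotation [NeZero r] {s : ℕ} {g : Fin s → Fin r} {f : Fin t → Fin r}
    (hg : Function.Injective g) (h : ∃ c, ∀ j, ∃ k, f k = g j + c) :
    phi (graphUrtF r s g) ≤ phi (graphUrtF r t f) := by
  obtain ⟨c, h⟩ := h
  obtain ⟨e⟩ := nonempty_embedding_graphUrtF hg c h
  exact phi_le_of_embedding e

theorem six_le_phi_of_three_two (f : Fin 2 → Fin 3) (hf : Function.Injective f) :
    6 ≤ phi (graphUrtF 3 2 f) := by
  have h : ∀ f : Fin 2 → Fin 3, Function.Injective f → ∃ c, ∀ j, ∃ k, f k = ![0, 1] j + c := by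
    decide +kernel
  refine le_trans ?_ (phi_le_of_rotation (by decide) (h f hf))
  rw [phi_graphUrtF _ (by norm_num) id (by decide)]
  decide +kernel

theorem six_le_phi_of_five_two (f : Fin 2 → Fin 5) (hf : Function.Injective f) :
    6 ≤ phi (graphUrtF 5 2 f) := by
  have h : ∀ f : Fin 2 → Fin 5, Function.Injective f →
      (∃ c, ∀ j, ∃ k, f k = ![0, 1] j + c) ∨ ∃ c, ∀ j, ∃ k, f k = ![0, 2] j + c := by
    decide +kernel
  rcases h f hf with h | h
  · refine le_trans ?_ (phi_le_of_rotation (by decide) h)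
    rw [phi_graphUrtF _ (by norm_num) id (by decide)]
    decide +kernel
  · refine le_trans ?_ (phi_le_of_rotation (by decide) h)
    rw [phi_graphUrtF _ (by norm_num) (2 * ·) (by decide)]
    decide +kernel

theorem eight_le_phi_of_five_three (f : Fin 3 → Fin 5) (hf : Function.Injective f) :
    8 ≤ phi (graphUrtF 5 3 f) := by
  have h : ∀ f : Fin 3 → Fin 5, Function.Injective f →
      (∃ c, ∀ j, ∃ k, f k = ![0, 1, 2] j + c) ∨ ∃ c, ∀ j, ∃ k, f k = ![0, 2, 3] j + c := by
    decide +kernel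
  rcases h f hf with h | h
  · refine le_trans ?_ (phi_le_of_rotation (by decide) h)
    rw [phi_graphUrtF _ (by norm_num) id (by decide)]
    decide +kernel
  · refine le_trans ?_ (phi_le_of_rotation (by decide) h)
    rw [phi_graphUrtF _ (by norm_num) (fun j => if j = 0 then 0 else j + 1) (by decide)]
    decide +kernel

theorem exists_rotation_of_one [NeZero r] (f : Fin 1 → Fin r) :
    ∃ c, ∀ _ : Fin 1, ∃ k, f k = (0 : Fin r) + c :=
  ⟨f 0, fun _ => ⟨0, (zero_add _).symm⟩⟩

theorem nine_le_phi_of_six_one (f : Fin 1 → Fin 6) : 9 ≤ phi (graphUrtF 6 1 f) := by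
  refine le_trans ?_ (phi_le_of_rotation (g := fun _ => 0)
    (Function.injective_of_subsingleton _) (exists_rotation_of_one f))
  rw [phi_graphUrtF _ (by norm_num) id (by decide)]
  decide +kernel

theorem le_phi_graphUrtF_or_iso (hr : 3 ≤ r) (ht : 1 ≤ t) (f : Fin t → Fin r)
    (hf : Function.Injective f) :
    (r + t) / 2 + 3 ≤ phi (graphUrtF r t f) ∨
      Nonempty (graphUrtF r t f ≃g graphUrt 3 1 (by omega)) ∨
      Nonempty (graphUrtF r t f ≃g graphUrt 5 1 (by omega)) ∨
      Nonempty (graphUrtF r t f ≃g graphUrt 4 4 (by omega)) := by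
  have htr : t ≤ r := by simpa using Fintype.card_le_of_injective f hf
  have hsub : ∀ {s : ℕ} (hs : s ≤ t), phi (graphUrtF r s (f ∘ Fin.castLE hs)) ≤
      phi (graphUrtF r t f) := fun hs => phi_graphUrtF_comp_le _ (Fin.castLE_injective hs)
  have hinj : ∀ {s : ℕ} (hs : s ≤ t), Function.Injective (f ∘ Fin.castLE hs) :=
    fun hs => hf.comp (Fin.castLE_injective hs)
  obtain rfl | rfl | rfl | rfl | h7 : r = 3 ∨ r = 4 ∨ r = 5 ∨ r = 6 ∨ 7 ≤ r := by omega
  · by_cases h2 : 2 ≤ t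
    · have := (six_le_phi_of_three_two _ (hinj h2)).trans (hsub h2)
      exact Or.inl (by omega)
    · obtain rfl : t = 1 := by omega
      obtain ⟨c, hc⟩ := exists_rotation_of_one f
      exact Or.inr (Or.inl (nonempty_iso_graphUrtF (Fin.castLE_injective _) c
        fun j => by simpa [Subsingleton.elim j 0] using hc j))
  · by_cases h3 : t ≤ 3
    · have h6 : 6 ≤ phi (cycleGraph 4) := by
        rw [phi_cycleGraph (by norm_num)]
        decide +kernel
      have := h6.trans (phi_cycleGraph_le f)
      exact Or.inl (by omega)
    · obtain rfl : t = 4 := by omega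
      exact Or.inr (Or.inr (Or.inr (nonempty_iso_graphUrtF (Fin.castLE_injective _) 0
        fun _ => Finite.surjective_of_injective hf _)))
  · obtain rfl | rfl | h3 : t = 1 ∨ t = 2 ∨ 3 ≤ t := by omega
    · obtain ⟨c, hc⟩ := exists_rotation_of_one f
      exact Or.inr (Or.inr (Or.inl (nonempty_iso_graphUrtF (Fin.castLE_injective _) c
        fun j => by simpa [Subsingleton.elim j 0] using hc j)))
    · exact Or.inl (six_le_phi_of_five_two f hf)
    · have := (eight_le_phi_of_five_three _ (hinj h3)).trans (hsub h3)
      exact Or.inl (by omega)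
  · have := (nine_le_phi_of_six_one _).trans (hsub ht)
    exact Or.inl (by omega)
  · have := (add_three_le_phi_cycleGraph h7).trans (phi_cycleGraph_le f)
    exact Or.inl (by omega)

end LowerBounds

theorem phi_graphUrt {r t : ℕ} (h : t ≤ r) (hr : 2 ≤ r) :
    phi (graphUrt r t h) = countMaxAvoiding (tripleMasks (r + t) (urtAdj r id)) (r + t) :=
  phi_graphUrtF _ hr id fun _ => rfl

/-- if `G ∈ 𝒰_{r,t}` with `r ≥ 3` and `t ≥ 1` (so `G` has order `n = r + t`),
then `φ(G) ≥ ⌊n/2⌋ + 2`, with equality iff `G` is isomorphic to `U_{3,1}`, `U_{5,1}` or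
`U_{4,4}`. -/
theorem stmt15 {V : Type*} [Fintype V] (G : SimpleGraph V) (r t : ℕ) (hr : 3 ≤ r) (ht : 1 ≤ t)
    (f : Fin t → Fin r) (hf : Function.Injective f) (hiso : Nonempty (G ≃g graphUrtF r t f))
    (hcard : Fintype.card V = r + t) :
    (r + t) / 2 + 2 ≤ phi G ∧
      (phi G = (r + t) / 2 + 2 ↔
        Nonempty (G ≃g graphUrt 3 1 (by omega)) ∨
        Nonempty (G ≃g graphUrt 5 1 (by omega)) ∨
        Nonempty (G ≃g graphUrt 4 4 (by omega))) := by
  obtain ⟨φ⟩ := hiso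
  have hphi : phi (graphUrtF r t f) = phi G := by
    have := Finite.of_fintype V
    exact (phi_congr φ).symm
  have hext : ∀ {a b : ℕ} (h : b ≤ a), 2 ≤ a → Nonempty (G ≃g graphUrt a b h) →
      phi G = countMaxAvoiding (tripleMasks (a + b) (urtAdj a id)) (a + b) ∧ r + t = a + b := by
    rintro a b h ha ⟨e⟩
    refine ⟨(phi_congr e).trans (phi_graphUrt h ha), ?_⟩
    rw [← hcard, Fintype.card_congr e.toEquiv]
    simp
  have heq : Nonempty (G ≃g graphUrt 3 1 (by omega)) ∨ Nonempty (G ≃g graphUrt 5 1 (by omega)) ∨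
      Nonempty (G ≃g graphUrt 4 4 (by omega)) → phi G = (r + t) / 2 + 2 := by
    rintro (h | h | h)
    all_goals
      obtain ⟨h1, h2⟩ := hext _ (by norm_num) h
      rw [h1, h2]
      decide +kernel
  rcases le_phi_graphUrtF_or_iso hr ht f hf with hlt | h
  · rw [hphi] at hlt
    exact ⟨by omega, fun h => by omega, heq⟩
  · have h := Or.imp (Nonempty.map φ.trans) (Or.imp (Nonempty.map φ.trans)
      (Nonempty.map φ.trans)) h
    exact ⟨(heq h).ge, fun _ => h, heq⟩
end

section
/- Let U be a unicyclic graph with at least 3 vertices, let w ∈ V(U), and let G₁ be the graph obtained from U by adding k ≥ 2 new pendant vertices v₁, …, v_k each adjacent to w. Then φ(G₁, w¹) = φ(U, w¹) + k·φ(U − N[w]), where N[w] is the closed neighbourhood of w in U. -/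
open SimpleGraph

section AddPendants

variable {V : Type*} {U : SimpleGraph V} {w : V} {k : ℕ}

@[simp]
theorem addPendants_adj_inl_inl {x y : V} :
    (addPendants U w k).Adj (Sum.inl x) (Sum.inl y) ↔ U.Adj x y := by
  simp only [addPendants, SimpleGraph.fromRel_adj]
  constructor
  · rintro ⟨-, h⟩
    simpa [U.adj_comm y x] using h
  · intro h
    simp [h, h.ne]

@[simp]
theorem addPendants_adj_inl_inr {x : V} {j : Fin k} :
    (addPendants U w k).Adj (Sum.inl x) (Sum.inr j) ↔ x = w := by
  simp [addPendants]

@[simp]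
theorem addPendants_adj_inr_inl {x : V} {j : Fin k} :
    (addPendants U w k).Adj (Sum.inr j) (Sum.inl x) ↔ x = w := by
  simp [addPendants]

@[simp]
theorem addPendants_adj_inr_inr {i j : Fin k} :
    ¬ (addPendants U w k).Adj (Sum.inr i) (Sum.inr j) := by
  simp [addPendants]

theorem IsDissoc.eq_of_adj {G : SimpleGraph V} {S : Set V} (h : IsDissoc G S) {v a b : V}
    (hv : v ∈ S) (ha : a ∈ S) (hb : b ∈ S) (hva : G.Adj v a) (hvb : G.Adj v b) : a = b :=
  h v hv ⟨ha, hva⟩ ⟨hb, hvb⟩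

/-- Maximality transfers along an order embedding `f` of vertex sets that preserves and reflects
dissociation sets, at a set `A` all of whose dissociated extensions lie in the range of `f`. -/
theorem isMaxDissoc_map_iff {W : Type*} {G : SimpleGraph V} {H : SimpleGraph W}
    (f : Set W → Set V) (hf : ∀ A B, f A ⊆ f B ↔ A ⊆ B)
    (hd : ∀ A, IsDissoc G (f A) ↔ IsDissoc H A) (A : Set W)
    (hA : ∀ T, IsDissoc G T → f A ⊆ T → ∃ B, T = f B) :
    IsMaxDissoc G (f A) ↔ IsMaxDissoc H A := by
  constructor
  · rintro ⟨h, hm⟩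
    refine ⟨(hd A).1 h, fun T hT hAT => hAT.antisymm ?_⟩
    rw [← hf, ← hm (f T) ((hd T).2 hT) ((hf A T).2 hAT)]
  · rintro ⟨h, hm⟩
    refine ⟨(hd A).2 h, fun T hT hAT => ?_⟩
    obtain ⟨B, rfl⟩ := hA T hT hAT
    rw [hm B ((hd B).1 hT) ((hf A B).1 hAT)]

theorem isDissoc_image_inl_iff (A : Set V) :
    IsDissoc (addPendants U w k) (Sum.inl '' A) ↔ IsDissoc U A := by
  constructor
  · intro h v hv a ha b hb
    exact Sum.inl_injective (h.eq_of_adj (v := Sum.inl v) (a := Sum.inl a) (b := Sum.inl b)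
      (by simpa) (by simpa using ha.1) (by simpa using hb.1)
      (by simpa using ha.2) (by simpa using hb.2))
  · rintro h _ ⟨v, hv, rfl⟩ _ ⟨⟨a, ha, rfl⟩, hva⟩ _ ⟨⟨b, hb, rfl⟩, hvb⟩
    rw [addPendants_adj_inl_inl] at hva hvb
    rw [h.eq_of_adj hv ha hb hva hvb]

/-- A dissociation set in which `w` has a neighbour of `U` contains no pendant vertex. -/
theorem IsDissoc.exists_eq_image_inl {T : Set (V ⊕ Fin k)}
    (hT : IsDissoc (addPendants U w k) T) {x : V} (hw : Sum.inl w ∈ T) (hx : Sum.inl x ∈ T)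
    (hwx : U.Adj w x) : ∃ B : Set V, T = Sum.inl '' B := by
  refine ⟨Sum.inl ⁻¹' T, (Set.image_preimage_eq_of_subset ?_).symm⟩
  rintro (y | j) hy
  · exact ⟨y, rfl⟩
  · have := hT.eq_of_adj hw hx hy (by simpa) (by simp)
    simp at this

/-- The vertices of `A`, a set avoiding `N[w]`, together with `w` and its `j`-th pendant vertex. -/
def insertPendant (U : SimpleGraph V) (w : V) {k : ℕ} (j : Fin k)
    (A : Set {v | v ∉ insert w (U.neighborSet w)}) : Set (V ⊕ Fin k) :=
  {Sum.inl w, Sum.inr j} ∪ (fun v => Sum.inl v.1) '' A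

theorem inl_mem_insertPendant {j : Fin k} {A : Set {v | v ∉ insert w (U.neighborSet w)}}
    {x : V} : Sum.inl x ∈ insertPendant U w j A ↔
      x = w ∨ ∃ h, (⟨x, h⟩ : {v | v ∉ insert w (U.neighborSet w)}) ∈ A := by
  simp [insertPendant]

@[simp]
theorem inr_mem_insertPendant {i j : Fin k} {A : Set {v | v ∉ insert w (U.neighborSet w)}} :
    Sum.inr i ∈ insertPendant U w j A ↔ i = j := by
  simp [insertPendant]

theorem coe_mem_insertPendant {j : Fin k} {A : Set {v | v ∉ insert w (U.neighborSet w)}}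
    {x : {v | v ∉ insert w (U.neighborSet w)}} :
    Sum.inl x.1 ∈ insertPendant U w j A ↔ x ∈ A := by
  rw [inl_mem_insertPendant]
  constructor
  · rintro (h | ⟨_, h⟩)
    · exact absurd (Or.inl h) x.2
    · exact h
  · exact fun h => Or.inr ⟨x.2, h⟩

theorem insertPendant_subset_iff {j : Fin k} (A B : Set {v | v ∉ insert w (U.neighborSet w)}) :
    insertPendant U w j A ⊆ insertPendant U w j B ↔ A ⊆ B := by
  constructor
  · intro h x hx
    exact coe_mem_insertPendant.1 (h (coe_mem_insertPendant.2 hx))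
  · intro h
    exact Set.union_subset_union_right _ (Set.image_mono h)

/-- In `insertPendant U w j A` the only neighbour of `w` is its `j`-th pendant vertex. -/
theorem eq_inr_of_mem_insertPendant {j : Fin k} {A : Set {v | v ∉ insert w (U.neighborSet w)}}
    {y : V ⊕ Fin k} (hy : y ∈ insertPendant U w j A)
    (h : (addPendants U w k).Adj (Sum.inl w) y) : y = Sum.inr j := by
  rcases y with x | i
  · rw [addPendants_adj_inl_inl] at h
    rcases inl_mem_insertPendant.1 hy with rfl | ⟨hx, -⟩
    · exact absurd h (U.loopless.irrefl _)
    · exact absurd (Or.inr h) hx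
  · rw [inr_mem_insertPendant.1 hy]

theorem isDissoc_insertPendant_iff {j : Fin k}
    (A : Set {v | v ∉ insert w (U.neighborSet w)}) :
    IsDissoc (addPendants U w k) (insertPendant U w j A) ↔
      IsDissoc (U.induce {v | v ∉ insert w (U.neighborSet w)}) A := by
  constructor
  · intro h v hv a ha b hb
    exact Subtype.ext (Sum.inl_injective (h.eq_of_adj (coe_mem_insertPendant.2 hv)
      (coe_mem_insertPendant.2 ha.1) (coe_mem_insertPendant.2 hb.1)
      (addPendants_adj_inl_inl.2 ha.2) (addPendants_adj_inl_inl.2 hb.2)))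
  · rintro h (v | i) hv y ⟨hy, hvy⟩ z ⟨hz, hvz⟩
    · rcases inl_mem_insertPendant.1 hv with rfl | ⟨hvA, hv⟩
      · rw [eq_inr_of_mem_insertPendant hy hvy, eq_inr_of_mem_insertPendant hz hvz]
      · have key : ∀ u ∈ insertPendant U w j A, (addPendants U w k).Adj (Sum.inl v) u →
            ∃ a ∈ A, u = Sum.inl a.1 ∧ U.Adj v a := by
          rintro (u | i) hu hvu
          · rw [addPendants_adj_inl_inl] at hvu
            rcases inl_mem_insertPendant.1 hu with rfl | ⟨_, hu⟩
            · exact absurd (Or.inr hvu.symm) hvA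
            · exact ⟨_, hu, rfl, hvu⟩
          · rw [addPendants_adj_inl_inr] at hvu
            exact absurd (Or.inl hvu) hvA
        obtain ⟨a, ha, rfl, hva⟩ := key y hy hvy
        obtain ⟨b, hb, rfl, hvb⟩ := key z hz hvz
        rw [h.eq_of_adj (v := ⟨v, hvA⟩) hv ha hb hva hvb]
    · rcases y with y | y <;> rcases z with z | z <;> simp_all

/-- A dissociation set containing `w` and its `j`-th pendant vertex avoids all other neighbours
of `w`. -/
theorem IsDissoc.exists_eq_insertPendant {T : Set (V ⊕ Fin k)}
    (hT : IsDissoc (addPendants U w k) T) {j : Fin k} (hw : Sum.inl w ∈ T)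
    (hj : Sum.inr j ∈ T) : ∃ B, T = insertPendant U w j B := by
  refine ⟨{x | Sum.inl x.1 ∈ T}, Set.ext ?_⟩
  have key : ∀ y ∈ T, (addPendants U w k).Adj (Sum.inl w) y → y = Sum.inr j :=
    fun y hy h => hT.eq_of_adj hw hy hj h (by simp)
  rintro (x | i)
  · rw [inl_mem_insertPendant]
    constructor
    · intro hx
      refine or_iff_not_imp_left.2 fun hne => ⟨?_, hx⟩
      rintro (h | h)
      · exact hne h
      · simpa using key _ hx (addPendants_adj_inl_inl.2 h)
    · rintro (rfl | ⟨_, h⟩)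
      exacts [hw, h]
  · rw [inr_mem_insertPendant]
    constructor
    · intro hi
      simpa using key _ hi (by simp)
    · rintro rfl
      exact hj

theorem isMaxDissoc_insertPendant_iff {j : Fin k}
    (A : Set {v | v ∉ insert w (U.neighborSet w)}) :
    IsMaxDissoc (addPendants U w k) (insertPendant U w j A) ↔
      IsMaxDissoc (U.induce {v | v ∉ insert w (U.neighborSet w)}) A :=
  isMaxDissoc_map_iff _ insertPendant_subset_iff isDissoc_insertPendant_iff A
    fun _ hT hAT => hT.exists_eq_insertPendant
      (hAT (inl_mem_insertPendant.2 (Or.inl rfl))) (hAT (inr_mem_insertPendant.2 rfl))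

theorem isMaxDissoc_image_inl_iff {A : Set V} {x : V} (hw : w ∈ A) (hx : x ∈ A)
    (hwx : U.Adj w x) :
    IsMaxDissoc (addPendants U w k) (Sum.inl '' A) ↔ IsMaxDissoc U A :=
  isMaxDissoc_map_iff _ (fun _ _ => Set.image_subset_image_iff Sum.inl_injective)
    isDissoc_image_inl_iff A fun _ hT hAT =>
      hT.exists_eq_image_inl (hAT ⟨w, hw, rfl⟩) (hAT ⟨x, hx, rfl⟩) hwx

theorem setOf_isMaxDissoc_addPendants :
    {S | IsMaxDissoc (addPendants U w k) S ∧ Sum.inl w ∈ S ∧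
        ∃! x, x ∈ S ∧ (addPendants U w k).Adj (Sum.inl w) x} =
      Set.image Sum.inl '' {S | IsMaxDissoc U S ∧ w ∈ S ∧ ∃! x, x ∈ S ∧ U.Adj w x} ∪
      (fun p : Fin k × Set _ => insertPendant U w p.1 p.2) '' (Set.univ ×ˢ
        {S | IsMaxDissoc (U.induce {v | v ∉ insert w (U.neighborSet w)}) S}) := by
  ext S
  constructor
  · rintro ⟨hS, hw, x | j, ⟨hx, hwx⟩, -⟩
    · rw [addPendants_adj_inl_inl] at hwx
      obtain ⟨B, rfl⟩ := hS.1.exists_eq_image_inl hw hx hwx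
      rw [Sum.inl_injective.mem_set_image] at hw hx
      have hB := (isMaxDissoc_image_inl_iff hw hx hwx).1 hS
      exact Or.inl ⟨B, ⟨hB, hw, x, ⟨hx, hwx⟩,
        fun y hy => hB.1.eq_of_adj hw hy.1 hx hy.2 hwx⟩, rfl⟩
    · obtain ⟨B, rfl⟩ := hS.1.exists_eq_insertPendant hw hx
      exact Or.inr ⟨(j, B), ⟨trivial, (isMaxDissoc_insertPendant_iff B).1 hS⟩, rfl⟩
  · rintro (⟨B, ⟨hB, hw, x, ⟨hx, hwx⟩, -⟩, rfl⟩ | ⟨⟨j, B⟩, ⟨-, hB⟩, rfl⟩)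
    · have hS := (isMaxDissoc_image_inl_iff (k := k) hw hx hwx).2 hB
      refine ⟨hS, ⟨w, hw, rfl⟩, Sum.inl x, ⟨⟨x, hx, rfl⟩, by simpa⟩, fun y hy => ?_⟩
      exact hS.1.eq_of_adj ⟨w, hw, rfl⟩ hy.1 ⟨x, hx, rfl⟩ hy.2 (by simpa)
    · exact ⟨(isMaxDissoc_insertPendant_iff B).2 hB, inl_mem_insertPendant.2 (Or.inl rfl),
        Sum.inr j, ⟨by simp, by simp⟩, fun y hy => eq_inr_of_mem_insertPendant hy.1 hy.2⟩

theorem insertPendant_injective : Function.Injective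
    (fun p : Fin k × Set {v | v ∉ insert w (U.neighborSet w)} => insertPendant U w p.1 p.2) := by
  rintro ⟨i, A⟩ ⟨j, B⟩ h
  dsimp only at h
  obtain rfl : i = j := by
    rw [← inr_mem_insertPendant (U := U) (w := w) (A := B), ← h, inr_mem_insertPendant]
  congr 1
  exact ((insertPendant_subset_iff A B).1 h.subset).antisymm
    ((insertPendant_subset_iff B A).1 h.superset)

end AddPendants

/-- let `U` be a unicyclic graph with at least 3 vertices, `w ∈ V(U)`, and `G₁`
obtained from `U` by adding `k ≥ 2` pendant vertices at `w`. Then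
`φ(G₁, w¹) = φ(U, w¹) + k · φ(U - N[w])`. -/
theorem stmt18 {V : Type*} [Fintype V] (U : SimpleGraph V) (hU : IsUnicyclic U)
    (hV : 3 ≤ Fintype.card V) (w : V) (k : ℕ) (hk : 2 ≤ k) :
    phi1 (addPendants U w k) (Sum.inl w) =
      phi1 U w + k * phi (U.induce {v | v ∉ insert w (U.neighborSet w)}) := by
  simp only [phi1, phi]
  rw [setOf_isMaxDissoc_addPendants, Set.ncard_union_eq ?_ (Set.toFinite _) (Set.toFinite _),
    Set.ncard_image_of_injective _ (Set.image_injective.2 Sum.inl_injective),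
    Set.ncard_image_of_injective _ insertPendant_injective, Set.ncard_prod, Set.ncard_univ,
    Nat.card_fin]
  rw [Set.disjoint_left]
  rintro _ ⟨A, -, rfl⟩ ⟨⟨j, B⟩, -, h⟩
  have hj : Sum.inr j ∈ insertPendant U w j B := inr_mem_insertPendant.2 rfl
  dsimp only at h
  rw [h] at hj
  simp at hj
end
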